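/- Let a : ℤ → ℂ be absolutely summable with a(0) = 0, and define b : ℤ → ℂ by b(n) = −i·sgn(n)·a(n). Then for every n ∈ ℤ: 2·(−i·sgn(n))·∑_{m∈ℤ} a(m)·b(n−m) = ∑_{m∈ℤ} b(m)·b(n−m) − ∑_{m∈ℤ} a(m)·a(n−m), all sums converging absolutely. This is the Fourier-coefficient form of Tricomi's identity 2H(f·Hf) = (Hf)² − f² for zero-mean functions f on the torus. -/

import Mathlib

/-!
The identity is the case `f = g` of Cotlar's identity `H (f * H g + H f * g) = H f * H g - f * g`.
On the Fourier side Cotlar's identity already holds for each pair of frequencies: the product of the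
modes `m` and `k` lives at frequency `m + k`, and comparing the symbols there amounts to
`sgn (m + k) * (sgn m + sgn k) = 1 + sgn m * sgn k`, valid whenever `m` and `k` are both nonzero.
The zero-mean hypothesis removes the remaining pairs.
-/

open SignType (sign)

section HilbertMultiplier

variable {Γ : Type*} [Zero Γ] [Preorder Γ] [DecidableLT Γ]

/-- The Hilbert transform on Fourier coefficients: the multiplier with symbol `-i * sgn n`. The
frequencies lie in a linearly ordered group `Γ`, which is `ℤ` for the torus, and the coefficients in
a complex vector space. -/
def hilbertMultiplier {E : Type*} [SMul ℂ E] (a : Γ → E) (n : Γ) : E :=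
  (-Complex.I * (sign n : ℂ)) • a n

theorem norm_hilbertMultiplier_le {E : Type*} [SeminormedAddCommGroup E] [NormedSpace ℂ E]
    (a : Γ → E) (n : Γ) : ‖hilbertMultiplier a n‖ ≤ ‖a n‖ := by
  have norm_sign_le : ‖(sign n : ℂ)‖ ≤ 1 := by
    rcases (sign n).trichotomy with h | h | h <;> simp [h]
  calc ‖hilbertMultiplier a n‖ = ‖(sign n : ℂ)‖ * ‖a n‖ := by
        simp [hilbertMultiplier, norm_smul]
    _ ≤ ‖a n‖ := mul_le_of_le_one_left (norm_nonneg _) norm_sign_le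

theorem summable_norm_hilbertMultiplier {E : Type*} [SeminormedAddCommGroup E] [NormedSpace ℂ E]
    {a : Γ → E} (ha : Summable fun n => ‖a n‖) : Summable fun n => ‖hilbertMultiplier a n‖ :=
  ha.of_nonneg_of_le (fun _ => norm_nonneg _) (norm_hilbertMultiplier_le a)

end HilbertMultiplier

theorem sign_add_mul_sign_add_sign {Γ R : Type*} [AddCommMonoid Γ] [LinearOrder Γ]
    [IsOrderedCancelAddMonoid Γ] [NonAssocRing R] {m k : Γ} (hm : m ≠ 0) (hk : k ≠ 0) :
    (sign (m + k) : R) * (sign m + sign k) = 1 + sign m * sign k := by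
  rcases hm.lt_or_gt with hm | hm <;> rcases hk.lt_or_gt with hk | hk
  · simp [sign_neg, hm, hk, add_neg hm hk, one_add_one_eq_two]
  · simp [sign_neg, sign_pos, hm, hk]
  · simp [sign_neg, sign_pos, hm, hk]
  · simp [sign_pos, hm, hk, add_pos hm hk]

theorem summable_norm_mul_sub {Γ A : Type*} [AddGroup Γ] [NormedRing A] {a c : Γ → A}
    (ha : Summable fun n => ‖a n‖) (hc : Summable fun n => ‖c n‖) (n : Γ) :
    Summable fun m => ‖a m * c (n - m)‖ :=
  (ha.mul_norm hc).comp_injective (i := fun m => (m, n - m)) fun _ _ h => congrArg Prod.fst h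

theorem hilbertMultiplier_mul_add_mul {Γ A : Type*} [AddCommMonoid Γ] [LinearOrder Γ]
    [IsOrderedCancelAddMonoid Γ] [Ring A] [Algebra ℂ A] {a c : Γ → A} (ha0 : a 0 = 0)
    (hc0 : c 0 = 0) (m k : Γ) :
    (-Complex.I * (sign (m + k) : ℂ)) • (a m * hilbertMultiplier c k + hilbertMultiplier a m * c k)
      = hilbertMultiplier a m * hilbertMultiplier c k - a m * c k := by
  rcases eq_or_ne m 0 with rfl | hm
  · simp [hilbertMultiplier, ha0]
  rcases eq_or_ne k 0 with rfl | hk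
  · simp [hilbertMultiplier, hc0]
  have symbol_eq : (-Complex.I * (sign (m + k) : ℂ)) * (-Complex.I * sign k + -Complex.I * sign m)
      = (-Complex.I * sign m) * (-Complex.I * sign k) - 1 := by
    linear_combination Complex.I ^ 2 * sign_add_mul_sign_add_sign (R := ℂ) hm hk + Complex.I_sq
  simp only [hilbertMultiplier, mul_smul_comm, smul_mul_assoc, ← add_smul, smul_smul, symbol_eq,
    sub_smul, one_smul, mul_comm (-Complex.I * (sign k : ℂ))]

theorem cotlar_identity_fourier {Γ A : Type*} [AddCommGroup Γ] [LinearOrder Γ]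
    [IsOrderedAddMonoid Γ] [NormedRing A] [NormedAlgebra ℂ A] [CompleteSpace A] {a c : Γ → A}
    (ha : Summable fun n => ‖a n‖) (hc : Summable fun n => ‖c n‖) (ha0 : a 0 = 0) (hc0 : c 0 = 0)
    (n : Γ) :
    hilbertMultiplier (fun n => ∑' m, a m * hilbertMultiplier c (n - m)
        + ∑' m, hilbertMultiplier a m * c (n - m)) n
      = ∑' m, hilbertMultiplier a m * hilbertMultiplier c (n - m) - ∑' m, a m * c (n - m) := by
  have summable_conv {u v : Γ → A} (hu : Summable fun n => ‖u n‖) (hv : Summable fun n => ‖v n‖) :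
      Summable fun m => u m * v (n - m) :=
    (summable_norm_mul_sub hu hv n).of_norm
  have hHa := summable_norm_hilbertMultiplier ha
  have hHc := summable_norm_hilbertMultiplier hc
  have hmixed := (summable_conv ha hHc).add (summable_conv hHa hc)
  rw [← (summable_conv hHa hHc).tsum_sub (summable_conv ha hc), hilbertMultiplier,
    ← (summable_conv ha hHc).tsum_add (summable_conv hHa hc), ← hmixed.tsum_const_smul]
  refine tsum_congr fun m => ?_
  simpa only [add_sub_cancel] using hilbertMultiplier_mul_add_mul ha0 hc0 m (n - m)

theorem tsum_mul_sub_comm {Γ A : Type*} [AddCommGroup Γ] [NonUnitalNonAssocCommSemiring A]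
    [TopologicalSpace A] (a c : Γ → A) (n : Γ) :
    ∑' m, a m * c (n - m) = ∑' m, c m * a (n - m) := by
  rw [← (Equiv.subLeft n).tsum_eq]
  simp [mul_comm]

theorem tricomi_identity_fourier_general {Γ A : Type*} [AddCommGroup Γ] [LinearOrder Γ]
    [IsOrderedAddMonoid Γ] [NormedCommRing A] [NormedAlgebra ℂ A] [CompleteSpace A] {a : Γ → A}
    (ha : Summable fun n => ‖a n‖) (ha0 : a 0 = 0) (n : Γ) :
    Summable (fun m => ‖a m * hilbertMultiplier a (n - m)‖)
      ∧ Summable (fun m => ‖hilbertMultiplier a m * hilbertMultiplier a (n - m)‖)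
      ∧ Summable (fun m => ‖a m * a (n - m)‖)
      ∧ 2 * hilbertMultiplier (fun n => ∑' m, a m * hilbertMultiplier a (n - m)) n
          = ∑' m, hilbertMultiplier a m * hilbertMultiplier a (n - m) - ∑' m, a m * a (n - m) := by
  have hHa := summable_norm_hilbertMultiplier ha
  refine ⟨summable_norm_mul_sub ha hHa n, summable_norm_mul_sub hHa hHa n,
    summable_norm_mul_sub ha ha n, ?_⟩
  simp only [← cotlar_identity_fourier ha ha ha0 ha0, tsum_mul_sub_comm (hilbertMultiplier a) a]
  simp only [hilbertMultiplier, smul_add, two_mul]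

/- STATEMENT 12: Tricomi's identity 2H(f·Hf) = (Hf)² − f² for zero-mean
functions on the torus, in Fourier-coefficient form: with b(n) = −i·sgn(n)·a(n),
2(−i·sgn(n))·(a⋆b)(n) = (b⋆b)(n) − (a⋆a)(n). -/

theorem tricomi_identity_fourier (a : ℤ → ℂ)
    (hsum : Summable (fun n : ℤ => ‖a n‖)) (ha0 : a 0 = 0)
    (b : ℤ → ℂ) (hb : ∀ n : ℤ, b n = -Complex.I * ((n.sign : ℤ) : ℂ) * a n) :
    ∀ n : ℤ,
      Summable (fun m : ℤ => ‖a m * b (n - m)‖)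
      ∧ Summable (fun m : ℤ => ‖b m * b (n - m)‖)
      ∧ Summable (fun m : ℤ => ‖a m * a (n - m)‖)
      ∧ 2 * (-Complex.I * ((n.sign : ℤ) : ℂ)) * (∑' m : ℤ, a m * b (n - m))
          = (∑' m : ℤ, b m * b (n - m)) - ∑' m : ℤ, a m * a (n - m) := by
  obtain rfl : b = hilbertMultiplier a := funext fun n => by
    rw [hb, Int.sign_eq_sign, SignType.intCast_cast, hilbertMultiplier, smul_eq_mul]
  intro n
  simpa [hilbertMultiplier, Int.sign_eq_sign, mul_assoc] using
    tricomi_identity_fourier_general hsum ha0 n
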